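/- Let R ≥ 1, d ≥ 1, let V, A_1, …, A_R, B_1, …, B_R ∈ M_d(ℂ) with A_R invertible, and let E ∈ ℂ. Then for every λ ∈ ℂ with λ ≠ 0, det(λ·1_{2Rd} − C_E) = λ^{R·d} · det(𝐇(λ) − E·1_d) / det(A_R). -/

import Mathlib

/-!
STATEMENT 6. For the companion matrix `C_E` of the order-`2R` recurrence
(with `A_R` invertible) and the Bloch Hamiltonian `𝐇(λ)`, one has, for `λ ≠ 0`,
`det(λ·1_{2Rd} − C_E) = λ^{R·d} · det(𝐇(λ) − E·1_d) / det(A_R)`.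
-/

open Matrix Finset

/-- The Bloch Hamiltonian `𝐇(λ) = V + ∑_{r=1}^R (λ^{−r}·B_r + λ^r·A_r)`. -/
noncomputable def bloch (R d : ℕ) (V : Matrix (Fin d) (Fin d) ℂ)
    (A B : ℕ → Matrix (Fin d) (Fin d) ℂ) (z : ℂ) : Matrix (Fin d) (Fin d) ℂ :=
  V + ∑ r ∈ Finset.Icc 1 R, (z⁻¹ ^ r • B r + z ^ r • A r)

/-- The `j`-th block (0-indexed, `j = 0, …, 2R−1`) of the last block row of the
companion matrix: `(−A_R⁻¹ B_R, …, −A_R⁻¹ B_1, −A_R⁻¹ V_E, −A_R⁻¹ A_1, …, −A_R⁻¹ A_{R−1})`. -/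
noncomputable def companionLastRow (R d : ℕ) (V : Matrix (Fin d) (Fin d) ℂ)
    (A B : ℕ → Matrix (Fin d) (Fin d) ℂ) (E : ℂ) (j : ℕ) : Matrix (Fin d) (Fin d) ℂ :=
  if j < R then -((A R)⁻¹ * B (R - j))
  else if j = R then -((A R)⁻¹ * (V - E • (1 : Matrix (Fin d) (Fin d) ℂ)))
  else -((A R)⁻¹ * A (j - R))

/-- The companion matrix `C_E ∈ M_{2Rd}(ℂ)`, realized as a matrix indexed by
`Fin (2R) × Fin d` (block index × intra-block index): the `(i, i+1)` blocks are `1_d`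
for `i = 0, …, 2R−2`, the last block row is `companionLastRow`, all other blocks `0`. -/
noncomputable def companion (R d : ℕ) (V : Matrix (Fin d) (Fin d) ℂ)
    (A B : ℕ → Matrix (Fin d) (Fin d) ℂ) (E : ℂ) :
    Matrix (Fin (2 * R) × Fin d) (Fin (2 * R) × Fin d) ℂ :=
  fun p q =>
    if (p.1 : ℕ) + 1 = 2 * R then companionLastRow R d V A B E (q.1 : ℕ) p.2 q.2
    else if (q.1 : ℕ) = (p.1 : ℕ) + 1 then (1 : Matrix (Fin d) (Fin d) ℂ) p.2 q.2
    else 0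

/-!
Adjoin to the recurrence `z xᵢ = xᵢ₊₁` the initial condition `x₀ = 1`: the resulting matrix `P` has
determinant `1`, and `P⁻¹` maps the last basis vector to `(1, z, …, zⁿ⁻¹)`. For a block companion
matrix `C`, `z - C` differs from `P ⊗ 1` only in the last block row, so the matrix determinant lemma
collapses its determinant to that of the matrix polynomial `zⁿ - ∑ zʲ cⱼ`, where `cⱼ` are the
blocks of the last row. For `C_E` this polynomial is `z ^ R • A_R⁻¹ (𝐇(z) - E)`: its coefficients
of degree `R ± r` pair up into the `r`-th term of the Bloch sum.
-/

open scoped Kronecker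

section PowerRecurrence

variable {K : Type*} [CommRing K]

/-- The matrix of the linear map `x ↦ (z x₀ - x₁, …, z xₙ₋₁ - xₙ, x₀)`, whose values prescribe the
recurrence satisfied by the powers of `z` together with its initial condition. The initial condition
is the last row, so that the other rows are those of `z - C` for a companion matrix `C`. -/
def powerRecurrenceMatrix (n : ℕ) (z : K) : Matrix (Fin (n + 1)) (Fin (n + 1)) K :=
  Matrix.of <| Fin.snoc (fun i : Fin n => Pi.single i.castSucc z - Pi.single i.succ 1)
    (Pi.single 0 1)

@[simp]
lemma powerRecurrenceMatrix_last (n : ℕ) (z : K) :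
    powerRecurrenceMatrix n z (Fin.last n) = Pi.single 0 1 := by
  ext j
  simp [powerRecurrenceMatrix]

@[simp]
lemma powerRecurrenceMatrix_castSucc {n : ℕ} (z : K) (i : Fin n) :
    powerRecurrenceMatrix n z i.castSucc = Pi.single i.castSucc z - Pi.single i.succ 1 := by
  ext j
  simp [powerRecurrenceMatrix]

lemma powerRecurrenceMatrix_mulVec_pow (n : ℕ) (z : K) :
    powerRecurrenceMatrix n z *ᵥ (fun i => z ^ (i : ℕ)) = Pi.single (Fin.last n) 1 := by
  ext i
  cases i using Fin.lastCases with
  | last => simp [Matrix.mulVec]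
  | cast i =>
    rw [Matrix.mulVec, powerRecurrenceMatrix_castSucc, sub_dotProduct]
    simp [pow_succ']

lemma det_powerRecurrenceMatrix (n : ℕ) (z : K) : (powerRecurrenceMatrix n z).det = 1 := by
  have hminor : ((powerRecurrenceMatrix n z).submatrix Fin.castSucc Fin.succ).det = (-1) ^ n := by
    rw [Matrix.det_of_isLowerTriangular]
    · simp [Fin.ext_iff]
    · intro i j hij
      have hij : (i : ℕ) < j := hij
      have hsucc : (j : ℕ) + 1 ≠ i := by omega
      simp [Fin.ext_iff, hij.ne', hsucc]
  rw [Matrix.det_succ_row _ (Fin.last n), Finset.sum_eq_single 0]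
  · simp [hminor, ← mul_pow]
  · intro j _ hj
    simp [hj]
  · simp

end PowerRecurrence

section BlockMatrices

/-- The block row with blocks `b i`; multiplied on the left by a `scalarBlockColumn`, it is the
block analogue of a rank-one matrix. -/
def blockRow {K ι m : Type*} (b : ι → Matrix m m K) : Matrix m (ι × m) K :=
  Matrix.of fun k q => b q.1 k q.2

variable {K ι m : Type*} [CommRing K] [DecidableEq m]

variable (m) in
/-- The block column whose `i`-th block is the scalar matrix `x i`, through which a vector of
scalars acts on a `blockRow`. -/
def scalarBlockColumn (x : ι → K) : Matrix (ι × m) m K :=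
  Matrix.of fun p k => x p.1 * (1 : Matrix m m K) p.2 k

variable [Fintype m]

lemma scalarBlockColumn_mul_blockRow_apply (x : ι → K) (b : ι → Matrix m m K) (i j : ι) (k l : m) :
    (scalarBlockColumn m x * blockRow b) (i, k) (j, l) = x i * b j k l := by
  simp [Matrix.mul_apply, scalarBlockColumn, blockRow, Matrix.one_apply]

variable [Fintype ι]

lemma blockRow_mul_scalarBlockColumn (b : ι → Matrix m m K) (x : ι → K) :
    blockRow b * scalarBlockColumn m x = ∑ i, x i • b i := by
  ext k l
  simp [Matrix.mul_apply, blockRow, scalarBlockColumn, Fintype.sum_prod_type, Matrix.one_apply,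
    Matrix.sum_apply, mul_comm]

lemma kronecker_one_mul_scalarBlockColumn (P : Matrix ι ι K) (x : ι → K) :
    P ⊗ₖ (1 : Matrix m m K) * scalarBlockColumn m x = scalarBlockColumn m (P *ᵥ x) := by
  ext ⟨i, k⟩ l
  simp [Matrix.mul_apply, scalarBlockColumn, Fintype.sum_prod_type, Matrix.mulVec, dotProduct,
    Matrix.one_apply]

lemma det_kronecker_one_add_mul_blockRow [DecidableEq ι] {P : Matrix ι ι K} (hP : IsUnit P.det)
    (x : ι → K) (b : ι → Matrix m m K) :
    (P ⊗ₖ (1 : Matrix m m K) + scalarBlockColumn m (P *ᵥ x) * blockRow b).det =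
      P.det ^ Fintype.card m * (1 + ∑ i, x i • b i).det := by
  have hdet : (P ⊗ₖ (1 : Matrix m m K)).det = P.det ^ Fintype.card m := by
    rw [Matrix.det_kronecker, Matrix.det_one, one_pow, mul_one]
  have hunit : IsUnit (P ⊗ₖ (1 : Matrix m m K)).det := hdet ▸ hP.pow _
  rw [Matrix.det_add_mul _ _ hunit, hdet, ← kronecker_one_mul_scalarBlockColumn, Matrix.mul_assoc,
    Matrix.nonsing_inv_mul_cancel_left _ _ hunit, blockRow_mul_scalarBlockColumn]

end BlockMatrices

section BlockCompanion

variable {K m : Type*} [CommRing K] [DecidableEq m] {n : ℕ}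

/-- The block companion matrix with last block row `c`: identity blocks stand just above the
diagonal, and all other blocks are zero. -/
def blockCompanion (c : Fin n → Matrix m m K) : Matrix (Fin n × m) (Fin n × m) K :=
  fun p q =>
    if (p.1 : ℕ) + 1 = n then c q.1 p.2 q.2
    else if (q.1 : ℕ) = (p.1 : ℕ) + 1 then (1 : Matrix m m K) p.2 q.2
    else 0

lemma blockCompanion_last_apply (c : Fin (n + 1) → Matrix m m K) (j : Fin (n + 1)) (k l : m) :
    blockCompanion c (Fin.last n, k) (j, l) = c j k l := by
  simp [blockCompanion]

lemma blockCompanion_castSucc_apply (c : Fin (n + 1) → Matrix m m K) (i : Fin n) (j : Fin (n + 1))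
    (k l : m) :
    blockCompanion c (i.castSucc, k) (j, l) =
      (Pi.single i.succ 1 : Fin (n + 1) → K) j * (1 : Matrix m m K) k l := by
  simp [blockCompanion, Pi.single_apply, Fin.ext_iff, i.isLt.ne]

variable [Fintype m]

lemma smul_one_sub_blockCompanion (c : Fin (n + 1) → Matrix m m K) (z : K) :
    z • (1 : Matrix (Fin (n + 1) × m) (Fin (n + 1) × m) K) - blockCompanion c =
      powerRecurrenceMatrix n z ⊗ₖ (1 : Matrix m m K) +
        scalarBlockColumn m (Pi.single (Fin.last n) (1 : K)) *
          blockRow fun j => (Pi.single (Fin.last n) z - Pi.single 0 1 : Fin (n + 1) → K) j •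
            (1 : Matrix m m K) - c j := by
  ext ⟨i, k⟩ ⟨j, l⟩
  have hscalar : z * (1 : Matrix (Fin (n + 1) × m) (Fin (n + 1) × m) K) (i, k) (j, l) =
      (Pi.single i z : Fin (n + 1) → K) j * (1 : Matrix m m K) k l := by
    rw [← Matrix.one_kronecker_one, Matrix.kronecker_apply, ← mul_assoc]
    simp [Matrix.one_apply, Pi.single_apply, eq_comm]
  rw [Matrix.sub_apply, Matrix.smul_apply, smul_eq_mul, hscalar, Matrix.add_apply,
    Matrix.kronecker_apply, scalarBlockColumn_mul_blockRow_apply]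
  cases i using Fin.lastCases with
  | last =>
    rw [blockCompanion_last_apply, powerRecurrenceMatrix_last, Pi.single_eq_same,
      Matrix.sub_apply, Matrix.smul_apply, smul_eq_mul, Pi.sub_apply]
    ring
  | cast i =>
    rw [blockCompanion_castSucc_apply, powerRecurrenceMatrix_castSucc,
      Pi.single_eq_of_ne (Fin.castSucc_ne_last i), Pi.sub_apply]
    ring

theorem det_smul_one_sub_blockCompanion (c : Fin n → Matrix m m K) (z : K) :
    (z • (1 : Matrix (Fin n × m) (Fin n × m) K) - blockCompanion c).det =
      (z ^ n • (1 : Matrix m m K) - ∑ j : Fin n, z ^ (j : ℕ) • c j).det := by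
  cases n with
  | zero => simp
  | succ n =>
    have hP := det_powerRecurrenceMatrix n z
    have hsum : ∑ j : Fin (n + 1), z ^ (j : ℕ) •
        ((Pi.single (Fin.last n) z - Pi.single 0 1 : Fin (n + 1) → K) j • (1 : Matrix m m K) -
          c j) =
          z ^ (n + 1) • (1 : Matrix m m K) - 1 - ∑ j : Fin (n + 1), z ^ (j : ℕ) • c j := by
      simp [smul_sub, sub_smul, sum_sub_distrib, Pi.single_apply, smul_smul, pow_succ]
    rw [smul_one_sub_blockCompanion, ← powerRecurrenceMatrix_mulVec_pow n z,
      det_kronecker_one_add_mul_blockRow (hP ▸ isUnit_one), hP, one_pow, one_mul, hsum]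
    congr 1
    abel

end BlockCompanion

lemma sum_range_two_mul_add_one_eq_add_sum_Icc {M : Type*} [AddCommMonoid M] (f : ℕ → M) (R : ℕ) :
    ∑ j ∈ range (2 * R + 1), f j = f R + ∑ r ∈ Icc 1 R, (f (R - r) + f (R + r)) := by
  have hIcc (g : ℕ → M) : ∑ r ∈ Icc 1 R, g r = ∑ r ∈ range R, g (r + 1) := by
    rw [range_eq_Ico, sum_Ico_add' g]
    rfl
  have hlow : ∑ r ∈ range R, f (R - (r + 1)) = ∑ j ∈ range R, f j := by
    rw [← sum_range_reflect f]
    exact sum_congr rfl fun r _ => by rw [Nat.sub_sub, add_comm]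
  rw [two_mul, add_assoc, sum_range_add, sum_range_succ', hIcc, sum_add_distrib, hlow, add_zero]
  abel

section Bloch

variable {R d : ℕ} (V : Matrix (Fin d) (Fin d) ℂ) (A B : ℕ → Matrix (Fin d) (Fin d) ℂ) (E : ℂ)

lemma companionLastRow_self :
    companionLastRow R d V A B E R = -((A R)⁻¹ * (V - E • 1)) := by
  simp [companionLastRow]

lemma companionLastRow_sub {r : ℕ} (hr : 0 < r) (hrR : r ≤ R) :
    companionLastRow R d V A B E (R - r) = -((A R)⁻¹ * B r) := by
  rw [companionLastRow, if_pos (Nat.sub_lt (hr.trans_le hrR) hr), Nat.sub_sub_self hrR]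

lemma companionLastRow_add {r : ℕ} (hr : 0 < r) :
    companionLastRow R d V A B E (R + r) = -((A R)⁻¹ * A r) := by
  simp [companionLastRow, hr.ne']

lemma sum_pow_smul_companionLastRow {z : ℂ} (hz : z ≠ 0) :
    ∑ j ∈ range (2 * R + 1), z ^ j • companionLastRow R d V A B E j =
      -(z ^ R • ((A R)⁻¹ * (bloch R d V A B z - E • 1))) := by
  have hpair : ∀ r ∈ Icc 1 R,
      z ^ (R - r) • companionLastRow R d V A B E (R - r) +
          z ^ (R + r) • companionLastRow R d V A B E (R + r) =
        -(z ^ R • ((A R)⁻¹ * (z⁻¹ ^ r • B r + z ^ r • A r))) := by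
    intro r hr
    obtain ⟨hr, hrR⟩ := mem_Icc.mp hr
    rw [companionLastRow_sub V A B E hr hrR, companionLastRow_add V A B E hr, pow_sub₀ z hz hrR,
      pow_add, ← inv_pow]
    simp only [Matrix.mul_add, Matrix.mul_smul, smul_add, smul_neg, smul_smul, neg_add]
  rw [sum_range_two_mul_add_one_eq_add_sum_Icc, sum_congr rfl hpair, companionLastRow_self, bloch,
    add_sub_right_comm, Matrix.mul_add, Matrix.mul_sum, smul_add, smul_sum, neg_add,
    sum_neg_distrib, smul_neg]

lemma pow_smul_one_sub_sum_companionLastRow (hR : 0 < R) (hAR : IsUnit (A R).det) {z : ℂ}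
    (hz : z ≠ 0) :
    z ^ (2 * R) • 1 - ∑ j : Fin (2 * R), z ^ (j : ℕ) • companionLastRow R d V A B E j =
      z ^ R • ((A R)⁻¹ * (bloch R d V A B z - E • 1)) := by
  -- One step past the last block, the formula for the row gives minus the leading coefficient `1`.
  have htop : companionLastRow R d V A B E (2 * R) = -1 := by
    rw [two_mul, companionLastRow_add V A B E hR, Matrix.nonsing_inv_mul _ hAR]
  have hsum := sum_pow_smul_companionLastRow (R := R) V A B E hz
  rw [sum_range_succ, htop, sum_range] at hsum
  rw [← neg_inj, ← hsum, smul_neg, neg_sub, sub_eq_add_neg]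

end Bloch

theorem companion_charpoly_eval (R d : ℕ) (hR : 1 ≤ R) (hd : 1 ≤ d)
    (V : Matrix (Fin d) (Fin d) ℂ) (A B : ℕ → Matrix (Fin d) (Fin d) ℂ)
    (hAR : IsUnit (A R).det) (E : ℂ) (z : ℂ) (hz : z ≠ 0) :
    (z • (1 : Matrix (Fin (2 * R) × Fin d) (Fin (2 * R) × Fin d) ℂ)
        - companion R d V A B E).det =
      z ^ (R * d) * (bloch R d V A B z - E • (1 : Matrix (Fin d) (Fin d) ℂ)).det
        / (A R).det := by
  have hcompanion : companion R d V A B E =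
      blockCompanion fun j : Fin (2 * R) => companionLastRow R d V A B E j := rfl
  rw [hcompanion, det_smul_one_sub_blockCompanion,
    pow_smul_one_sub_sum_companionLastRow V A B E hR hAR hz, Matrix.det_smul, Matrix.det_mul,
    Matrix.det_nonsing_inv, Ring.inverse_eq_inv', Fintype.card_fin, ← pow_mul]
  ring
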